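/- arXiv:1604.05433 — 4 statements merged into one kernel-verified Lean document; each statement's English description precedes it below -/
import Mathlib

section
/- Let 0 < β < π, M > 0 and ε > 0. There exist Δ = Δ(ε, β, M) > 0 and C = C(ε, β, M) < ∞ such that: for every continuously differentiable function H₀ : Π_β → ℂ with |H₀(z)| ≤ M and |∇H₀(z)| ≤ M for all z ∈ Π_β, there exists a continuously differentiable function g : Π_β → ℂ with (1) ∂̄g = ∂̄H₀ on Π_β, (2) |g(x)| ≤ ε for all real x ≥ Δ, and (3) |∂g(z)| ≤ C for all z ∈ Π_β. -/
/-!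
Writing `g = H₀ - h`, one needs an entire function `h` whose derivative is bounded on the strip
and which is uniformly `ε`-close to `H₀` on `[1, ∞)`. Take for `h` the Gaussian mollification
`h(z) = √(b/π) ∫ F(t) exp(-b (z - t)²) dt` of `F(t) = H₀(max t 1)`, which is a bounded
`M`-Lipschitz function on the whole real line.

* Since `|exp(-b (z - t)²)| = exp(b y²) exp(-b (x - t)²)`, one has `|h(z)| ≤ M exp(b y²)`
  (`norm_mollify_le`), and Cauchy's estimate on unit circles bounds `h'` on the strip.
* On the real axis the kernel is a probability density of standard deviation of order `b^(-1/2)`,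
  so `|h(x) - F(x)| ≤ M √(2/b)` by the Lipschitz bound (`norm_mollify_sub_le`); the choice
  `b = 2 M² / ε²` makes this equal to `ε`.
-/

/-- The half-strip `Π_β = {x + iy : x > 0, |y| < β/2}`. -/
def halfStrip (β : ℝ) : Set ℂ := {z : ℂ | 0 < z.re ∧ |z.im| < β / 2}

/-- The Wirtinger derivative `∂̄G = (∂G/∂x + i ∂G/∂y)/2`. -/
noncomputable def dbar (G : ℂ → ℂ) (z : ℂ) : ℂ :=
  (fderiv ℝ G z 1 + Complex.I * fderiv ℝ G z Complex.I) / 2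

/-- The Wirtinger derivative `∂G = (∂G/∂x - i ∂G/∂y)/2`. -/
noncomputable def dz (G : ℂ → ℂ) (z : ℂ) : ℂ :=
  (fderiv ℝ G z 1 - Complex.I * fderiv ℝ G z Complex.I) / 2

/-- The Gaussian mollification `z ↦ √(b/π) ∫ F(t) exp(-b (z - t)²) dt` of a function `F` on the
real line, evaluated at complex points. -/
noncomputable def mollify (b : ℝ) (F : ℝ → ℂ) (z : ℂ) : ℂ :=
  (Real.sqrt (b / Real.pi) : ℂ) * ∫ t : ℝ, F t * Complex.exp (-b * (z - t) ^ 2)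

lemma norm_gauss (b : ℝ) (z : ℂ) (t : ℝ) :
    ‖Complex.exp (-b * (z - t) ^ 2)‖
      = Real.exp (b * z.im ^ 2) * Real.exp (-b * (t - z.re) ^ 2) := by
  rw [Complex.norm_exp, ← Real.exp_add]
  congr 1
  simp [pow_two]
  ring

lemma integrable_gauss_shift {b : ℝ} (hb : 0 < b) (x : ℝ) :
    MeasureTheory.Integrable (fun t : ℝ => Real.exp (-b * (t - x) ^ 2)) :=
  (integrable_exp_neg_mul_sq hb).comp_sub_right x

lemma integral_gauss_shift (b : ℝ) (x : ℝ) :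
    ∫ t : ℝ, Real.exp (-b * (t - x) ^ 2) = Real.sqrt (Real.pi / b) := by
  rw [MeasureTheory.integral_sub_right_eq_self (fun t : ℝ => Real.exp (-b * t ^ 2)) x,
    integral_gaussian]

lemma sqrt_mul_sqrt_inv {b : ℝ} (hb : 0 < b) :
    Real.sqrt (b / Real.pi) * Real.sqrt (Real.pi / b) = 1 := by
  have := Real.pi_pos
  rw [← Real.sqrt_mul (by positivity)]
  rw [show b / Real.pi * (Real.pi / b) = 1 by field_simp]
  simp

lemma continuous_integrand (b : ℝ) {F : ℝ → ℂ} (hF : Continuous F) (z : ℂ) :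
    Continuous (fun t : ℝ => F t * Complex.exp (-b * (z - t) ^ 2)) := by
  fun_prop

lemma norm_integrand_le {b M : ℝ} {F : ℝ → ℂ} (hM : ∀ t, ‖F t‖ ≤ M) (z : ℂ) (t : ℝ) :
    ‖F t * Complex.exp (-b * (z - t) ^ 2)‖
      ≤ M * Real.exp (b * z.im ^ 2) * Real.exp (-b * (t - z.re) ^ 2) := by
  rw [norm_mul, norm_gauss, mul_assoc]
  exact mul_le_mul_of_nonneg_right (hM t) (by positivity)

lemma integrable_integrand {b M : ℝ} (hb : 0 < b) {F : ℝ → ℂ} (hF : Continuous F)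
    (hM : ∀ t, ‖F t‖ ≤ M) (z : ℂ) :
    MeasureTheory.Integrable (fun t : ℝ => F t * Complex.exp (-b * (z - t) ^ 2)) :=
  ((integrable_gauss_shift hb z.re).const_mul (M * Real.exp (b * z.im ^ 2))).mono'
    (continuous_integrand b hF z).aestronglyMeasurable
    (Filter.Eventually.of_forall fun t => norm_integrand_le hM z t)

lemma norm_mollify_le {b M : ℝ} (hb : 0 < b) {F : ℝ → ℂ} (hM : ∀ t, ‖F t‖ ≤ M) (z : ℂ) :
    ‖mollify b F z‖ ≤ M * Real.exp (b * z.im ^ 2) := by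
  have h1 : ‖∫ t : ℝ, F t * Complex.exp (-b * (z - t) ^ 2)‖
      ≤ M * Real.exp (b * z.im ^ 2) * Real.sqrt (Real.pi / b) := by
    rw [← integral_gauss_shift b z.re, ← MeasureTheory.integral_const_mul]
    exact MeasureTheory.norm_integral_le_of_norm_le
      ((integrable_gauss_shift hb z.re).const_mul _)
      (Filter.Eventually.of_forall fun t => norm_integrand_le hM z t)
  rw [mollify, norm_mul, Complex.norm_real, Real.norm_of_nonneg (Real.sqrt_nonneg _)]
  calc Real.sqrt (b / Real.pi) * _
      ≤ Real.sqrt (b / Real.pi) * (M * Real.exp (b * z.im ^ 2) * Real.sqrt (Real.pi / b)) :=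
        mul_le_mul_of_nonneg_left h1 (Real.sqrt_nonneg _)
    _ = M * Real.exp (b * z.im ^ 2) * (Real.sqrt (b / Real.pi) * Real.sqrt (Real.pi / b)) := by
        ring
    _ = M * Real.exp (b * z.im ^ 2) := by rw [sqrt_mul_sqrt_inv hb, mul_one]

lemma differentiable_mollify {b M : ℝ} (hb : 0 < b) {F : ℝ → ℂ} (hF : Continuous F)
    (hM : ∀ t, ‖F t‖ ≤ M) : Differentiable ℂ (mollify b F) := by
  intro z₀
  have hM0 : 0 ≤ M := (norm_nonneg _).trans (hM 0)
  refine DifferentiableAt.const_mul ?_ _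
  -- On the unit disc around `z₀` every `|z|` is at most `R`, and `(t - x)² ≥ t²/2 - x²`.
  set R : ℝ := ‖z₀‖ + 1 with hR
  have key := hasDerivAt_integral_of_dominated_loc_of_deriv_le
    (𝕜 := ℂ) (μ := MeasureTheory.volume)
    (F := fun (z : ℂ) (t : ℝ) => F t * Complex.exp (-b * (z - t) ^ 2))
    (F' := fun (z : ℂ) (t : ℝ) => F t * (Complex.exp (-b * (z - t) ^ 2) * (-b * (2 * (z - t)))))
    (x₀ := z₀) (s := Metric.ball z₀ 1)
    (bound := fun t : ℝ => M * Real.exp (2 * b * R ^ 2) * (2 * b) *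
      (‖t * Real.exp (-(b / 2) * t ^ 2)‖ + R * Real.exp (-(b / 2) * t ^ 2)))
    (Metric.ball_mem_nhds z₀ one_pos)
    (Filter.Eventually.of_forall fun z => (continuous_integrand b hF z).aestronglyMeasurable)
    (integrable_integrand hb hF hM z₀)
    (by
      apply Continuous.aestronglyMeasurable
      fun_prop)
    (by
      refine Filter.Eventually.of_forall fun t z hz => ?_
      have hz' : ‖z‖ ≤ R := by
        have h1 : ‖z - z₀‖ < 1 := by simpa [dist_eq_norm] using hz
        have h2 := norm_sub_norm_le z z₀
        linarith
      have hre := (Complex.abs_re_le_norm z).trans hz'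
      have him := (Complex.abs_im_le_norm z).trans hz'
      have hre2 : z.re ^ 2 ≤ R ^ 2 := sq_le_sq' (by linarith [neg_le_of_abs_le hre])
        (le_of_abs_le hre)
      have him2 : z.im ^ 2 ≤ R ^ 2 := sq_le_sq' (by linarith [neg_le_of_abs_le him])
        (le_of_abs_le him)
      have hexp : ‖Complex.exp (-b * (z - t) ^ 2)‖
          ≤ Real.exp (2 * b * R ^ 2) * Real.exp (-(b / 2) * t ^ 2) := by
        rw [norm_gauss, ← Real.exp_add, ← Real.exp_add, Real.exp_le_exp]
        have h3 : z.im ^ 2 - (t - z.re) ^ 2 ≤ 2 * R ^ 2 - t ^ 2 / 2 := by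
          nlinarith [sq_nonneg (t - 2 * z.re)]
        nlinarith [mul_le_mul_of_nonneg_left h3 hb.le]
      have hlin : ‖-(b : ℂ) * (2 * (z - t))‖ ≤ 2 * b * (|t| + R) := by
        have h4 : ‖z - (t : ℂ)‖ ≤ |t| + R := by
          have := norm_sub_le z (t : ℂ)
          rw [Complex.norm_real, Real.norm_eq_abs] at this
          linarith
        rw [norm_mul, norm_mul, norm_neg, Complex.norm_real, Real.norm_of_nonneg hb.le]
        simp only [Complex.norm_ofNat]
        nlinarith [mul_le_mul_of_nonneg_left h4 hb.le]
      rw [norm_mul, norm_mul]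
      calc ‖F t‖ * (‖Complex.exp (-b * (z - t) ^ 2)‖ * ‖-(b : ℂ) * (2 * (z - t))‖)
          ≤ M * ((Real.exp (2 * b * R ^ 2) * Real.exp (-(b / 2) * t ^ 2))
              * (2 * b * (|t| + R))) := by
            gcongr
            exact hM t
        _ = _ := by
            rw [norm_mul, Real.norm_eq_abs, Real.norm_of_nonneg (Real.exp_pos _).le]
            ring)
    (by
      have hb2 : 0 < b / 2 := by positivity
      exact ((integrable_mul_exp_neg_mul_sq hb2).norm.add
        ((integrable_exp_neg_mul_sq hb2).const_mul R)).const_mul _)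
    (by
      refine Filter.Eventually.of_forall fun t z _ => ?_
      have h5 : HasDerivAt (fun z : ℂ => -(b : ℂ) * (z - t) ^ 2) (-b * (2 * (z - t))) z := by
        have := (((hasDerivAt_id z).sub_const (t : ℂ)).pow 2).const_mul (-(b : ℂ))
        simpa using this
      exact (h5.cexp).const_mul (F t))
  exact key.2.differentiableAt

/-- The mollification of an `M`-Lipschitz function is uniformly close to it on the real axis. -/
lemma norm_mollify_sub_le {b M : ℝ} (hb : 0 < b) {F : ℝ → ℂ} (hF : Continuous F)
    (hM : ∀ t, ‖F t‖ ≤ M) (hL : ∀ s t, ‖F s - F t‖ ≤ M * |s - t|) (x : ℝ) :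
    ‖F x - mollify b F x‖ ≤ M * Real.sqrt (2 / b) := by
  have hM0 : 0 ≤ M := (norm_nonneg _).trans (hM 0)
  have hpi := Real.pi_pos
  have hconst : F x = (Real.sqrt (b / Real.pi) : ℂ)
      * ∫ t : ℝ, F x * Complex.exp (-b * (x - t) ^ 2) := by
    have h1 : ∫ t : ℝ, Complex.exp (-b * (x - t) ^ 2) = (Real.sqrt (Real.pi / b) : ℂ) := by
      rw [← integral_gauss_shift b x, ← integral_complex_ofReal]
      congr 1
      ext t
      push_cast
      congr 1
      ring
    rw [MeasureTheory.integral_const_mul, h1, mul_left_comm, ← Complex.ofReal_mul,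
      sqrt_mul_sqrt_inv hb]
    simp
  have hint2 := integrable_integrand (M := M) hb (continuous_const (y := F x)) (fun _ => hM x) x
  have hdiff : F x - mollify b F x = (Real.sqrt (b / Real.pi) : ℂ)
      * ∫ t : ℝ, (F x - F t) * Complex.exp (-b * (x - t) ^ 2) := by
    conv_lhs => rw [hconst]
    rw [mollify, ← mul_sub, ← MeasureTheory.integral_sub hint2 (integrable_integrand hb hF hM x)]
    simp only [sub_mul]
  have hb2 : 0 < b / 2 := by positivity
  have hs : 0 < Real.sqrt b := Real.sqrt_pos.2 hb
  -- Half of the Gaussian absorbs the factor `|x - t|`, because `u ≤ exp (u²/2)`.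
  have hpt : ∀ t : ℝ, ‖(F x - F t) * Complex.exp (-b * (x - t) ^ 2)‖
      ≤ M / Real.sqrt b * Real.exp (-(b / 2) * (t - x) ^ 2) := by
    intro t
    have h2 : Real.sqrt b * |x - t| ≤ Real.exp (b / 2 * (t - x) ^ 2) := by
      have h3 := Real.add_one_le_exp (b / 2 * (t - x) ^ 2)
      have h4 : (Real.sqrt b * |x - t|) ^ 2 = b * (t - x) ^ 2 := by
        rw [mul_pow, Real.sq_sqrt hb.le, sq_abs]; ring
      nlinarith [sq_nonneg (Real.sqrt b * |x - t| - 1)]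
    have h5 : |x - t| ≤ Real.exp (b / 2 * (t - x) ^ 2) / Real.sqrt b := by
      rw [le_div_iff₀ hs]; linarith
    rw [norm_mul, norm_gauss]
    calc ‖F x - F t‖ * (Real.exp (b * (x : ℂ).im ^ 2) * Real.exp (-b * (t - (x : ℂ).re) ^ 2))
        ≤ (M * (Real.exp (b / 2 * (t - x) ^ 2) / Real.sqrt b))
            * (Real.exp (b * (x : ℂ).im ^ 2) * Real.exp (-b * (t - (x : ℂ).re) ^ 2)) := by
          gcongr
          exact (hL x t).trans (mul_le_mul_of_nonneg_left h5 hM0)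
      _ = M / Real.sqrt b
            * (Real.exp (b / 2 * (t - x) ^ 2) * Real.exp (-b * (t - x) ^ 2)) := by
          simp
          ring
      _ = _ := by
          rw [← Real.exp_add]
          congr 2
          ring
  have h6 : ‖∫ t : ℝ, (F x - F t) * Complex.exp (-b * (x - t) ^ 2)‖
      ≤ M / Real.sqrt b * Real.sqrt (Real.pi / (b / 2)) := by
    rw [← integral_gauss_shift (b / 2) x, ← MeasureTheory.integral_const_mul]
    exact MeasureTheory.norm_integral_le_of_norm_le
      ((integrable_gauss_shift hb2 x).const_mul _) (Filter.Eventually.of_forall hpt)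
  rw [hdiff, norm_mul, Complex.norm_real, Real.norm_of_nonneg (Real.sqrt_nonneg _)]
  calc Real.sqrt (b / Real.pi) * _
      ≤ Real.sqrt (b / Real.pi) * (M / Real.sqrt b * Real.sqrt (Real.pi / (b / 2))) :=
        mul_le_mul_of_nonneg_left h6 (Real.sqrt_nonneg _)
    _ = M * ((Real.sqrt (b / Real.pi) * Real.sqrt (Real.pi / (b / 2))) / Real.sqrt b) := by ring
    _ = M * Real.sqrt (2 / b) := by
        rw [← Real.sqrt_mul (by positivity), ← Real.sqrt_div (by positivity)]
        congr 2
        field_simp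

lemma isOpen_halfStrip (β : ℝ) : IsOpen (halfStrip β) :=
  (isOpen_lt continuous_const Complex.continuous_re).inter
    (isOpen_lt (Complex.continuous_im.abs) continuous_const)

lemma convex_halfStrip (β : ℝ) : Convex ℝ (halfStrip β) := by
  have h : halfStrip β
      = Complex.reLm ⁻¹' Set.Ioi 0 ∩ Complex.imLm ⁻¹' Set.Ioo (-(β / 2)) (β / 2) := by
    ext z
    simp [halfStrip, abs_lt]
  rw [h]
  exact ((convex_Ioi 0).linear_preimage _).inter ((convex_Ioo _ _).linear_preimage _)

lemma ofReal_mem_halfStrip {β : ℝ} (hβ : 0 < β) {x : ℝ} (hx : 0 < x) :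
    (x : ℂ) ∈ halfStrip β := by
  simp [halfStrip, hx, hβ]

/-- For any bounded `C¹` function `H₀` on `Π_β` with bounded gradient there is `g` with
`∂̄g = ∂̄H₀`, `|g| ≤ ε` on the far part `[Δ, ∞)` of the real axis, and `|∂g| ≤ C` on `Π_β`. -/
theorem solve_dbar_small_on_axis (β M ε : ℝ) (hβ0 : 0 < β) (hβ : β < Real.pi)
    (hM : 0 < M) (hε : 0 < ε) :
    ∃ Δ > (0:ℝ), ∃ C : ℝ, ∀ H₀ : ℂ → ℂ, ContDiffOn ℝ 1 H₀ (halfStrip β) →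
      (∀ z ∈ halfStrip β, ‖H₀ z‖ ≤ M) →
      (∀ z ∈ halfStrip β, ‖fderiv ℝ H₀ z‖ ≤ M) →
      ∃ g : ℂ → ℂ, ContDiffOn ℝ 1 g (halfStrip β) ∧
        (∀ z ∈ halfStrip β, dbar g z = dbar H₀ z) ∧
        (∀ x : ℝ, Δ ≤ x → ‖g (x:ℂ)‖ ≤ ε) ∧
        ∀ z ∈ halfStrip β, ‖dz g z‖ ≤ C := by
  -- This `b` solves `M √(2/b) = ε`.
  set b : ℝ := 2 * M ^ 2 / ε ^ 2 with hbdef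
  have hb : 0 < b := by positivity
  refine ⟨1, one_pos, M + M * Real.exp (b * (β / 2 + 1) ^ 2), fun H₀ hH hHM hHd => ?_⟩
  have hdiff : ∀ z ∈ halfStrip β, DifferentiableAt ℝ H₀ z := fun z hz =>
    (hH.differentiableOn one_ne_zero).differentiableAt ((isOpen_halfStrip β).mem_nhds hz)
  set F : ℝ → ℂ := fun t => H₀ ((max t 1 : ℝ) : ℂ) with hFdef
  have hmem : ∀ t : ℝ, ((max t 1 : ℝ) : ℂ) ∈ halfStrip β := fun t =>
    ofReal_mem_halfStrip hβ0 (lt_of_lt_of_le one_pos (le_max_right _ _))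
  have hFM : ∀ t, ‖F t‖ ≤ M := fun t => hHM _ (hmem t)
  have hFc : Continuous F :=
    hH.continuousOn.comp_continuous (by fun_prop) hmem
  have hFL : ∀ s t, ‖F s - F t‖ ≤ M * |s - t| := by
    intro s t
    have h1 := (convex_halfStrip β).norm_image_sub_le_of_norm_fderiv_le (𝕜 := ℝ) hdiff hHd
      (hmem t) (hmem s)
    refine h1.trans (mul_le_mul_of_nonneg_left ?_ hM.le)
    rw [← Complex.ofReal_sub, Complex.norm_real, Real.norm_eq_abs]
    exact abs_max_sub_max_le_abs s t 1
  set h : ℂ → ℂ := mollify b F with hh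
  have hhd : Differentiable ℂ h := differentiable_mollify hb hFc hFM
  have hfd : ∀ z v, fderiv ℝ h z v = v * deriv h z := by
    intro z v
    rw [((hhd z).hasDerivAt.hasFDerivAt.restrictScalars ℝ).fderiv]
    simp
  have hsub : ∀ z ∈ halfStrip β, ∀ v,
      fderiv ℝ (fun w => H₀ w - h w) z v = fderiv ℝ H₀ z v - v * deriv h z := by
    intro z hz v
    rw [fderiv_fun_sub (hdiff z hz) ((hhd z).restrictScalars ℝ), ← hfd]
    rfl
  refine ⟨fun z => H₀ z - h z, ?_, ?_, ?_, ?_⟩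
  · exact hH.sub ((hhd.contDiff (n := 1)).restrict_scalars ℝ).contDiffOn
  · intro z hz
    rw [dbar, dbar, hsub z hz, hsub z hz]
    linear_combination (-(deriv h z) / 2) * Complex.I_mul_I
  · intro x hx
    have h2 := norm_mollify_sub_le hb hFc hFM hFL x
    have h3 : F x = H₀ x := by simp [hFdef, max_eq_left hx]
    have h4 : M * Real.sqrt (2 / b) = ε := by
      rw [show 2 / b = (ε / M) ^ 2 by rw [hbdef]; field_simp, Real.sqrt_sq (by positivity)]
      field_simp
    rwa [h3, h4] at h2
  · intro z hz
    have h5 : dz (fun w => H₀ w - h w) z = dz H₀ z - deriv h z := by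
      rw [dz, dz, hsub z hz, hsub z hz]
      linear_combination (deriv h z / 2) * Complex.I_mul_I
    have h6 : ‖dz H₀ z‖ ≤ M := by
      have h7 : ‖fderiv ℝ H₀ z 1‖ ≤ M := by
        have := (fderiv ℝ H₀ z).le_of_opNorm_le (hHd z hz) 1
        simpa using this
      have h8 : ‖fderiv ℝ H₀ z Complex.I‖ ≤ M := by
        have := (fderiv ℝ H₀ z).le_of_opNorm_le (hHd z hz) Complex.I
        simpa using this
      have h9 := norm_sub_le (fderiv ℝ H₀ z 1) (Complex.I * fderiv ℝ H₀ z Complex.I)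
      rw [norm_mul, Complex.norm_I, one_mul] at h9
      rw [dz, norm_div, Complex.norm_ofNat]
      linarith
    have h10 : ‖deriv h z‖ ≤ M * Real.exp (b * (β / 2 + 1) ^ 2) := by
      have h11 := Complex.norm_deriv_le_of_forall_mem_sphere_norm_le (c := z) (f := h)
        (C := M * Real.exp (b * (β / 2 + 1) ^ 2)) one_pos hhd.diffContOnCl (by
          intro w hw
          refine (norm_mollify_le hb hFM w).trans ?_
          have h12 : |w.im| ≤ β / 2 + 1 := by
            have h13 : ‖w - z‖ = 1 := by simpa [dist_eq_norm] using hw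
            have h14 := Complex.abs_im_le_norm (w - z)
            rw [h13, Complex.sub_im] at h14
            have h15 := abs_sub_abs_le_abs_sub w.im z.im
            have h16 := hz.2
            linarith
          have h17 : w.im ^ 2 ≤ (β / 2 + 1) ^ 2 :=
            sq_le_sq' (by linarith [neg_le_of_abs_le h12]) (le_of_abs_le h12)
          gcongr)
      simpa using h11
    rw [h5]
    exact (norm_sub_le _ _).trans (add_le_add h6 h10)
end

section
/- There exists an analytic function g : 𝔻 → ℂ such that (1) the operator T_g is bounded on H^∞(𝔻), i.e. there is a constant C with sup_{w∈𝔻} |T_g f(w)| ≤ C for every analytic f on 𝔻 with |f| ≤ 1, and (2) g does not have bounded radial variation along the radius (−1, 0]: ∫₀¹ |g'(−r)| dr = +∞. In particular BRV is a proper subset of T[H^∞]. -/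
/-!
The coordinate `ζ = 2 - log (1 + z)` maps the unit disk onto the half-strip-like region
`|im ζ| < π / 2`, `exp (2 - re ζ) < 2 cos (im ζ)`, and maps the radius `(-1, 0]` onto the real
half-line `[2, ∞)`. In this coordinate let the derivative of the symbol be
`G ζ = exp ((iζ / 2 - 1) log ζ)`. For `ζ = x + iy` its modulus is comparable to `x ^ (-(1 + y / 2))`.
Since `|y| < π / 2`, the exponent is negative, so `G` is bounded on the whole region. On the real
line `|G x| = 1 / x`, which is not integrable at infinity, so the radial variation is infinite. On
the line `y = 1`, however, `|G|` is of order `x ^ (-3 / 2)`, which is integrable.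

The integral of `f g'` does not depend on the path. A point `x + iy` with `x ≥ 2` is
reached from the base point `ζ = 2` by going up to `2 + i`, then along the line `y = 1` to `x + i`,
then vertically to `x + iy`; the integral of `|G|` along this path is bounded independently of the
end point. The remaining points correspond to `|1 + z| ≥ 1`. They lie in the convex set `re z > -1/2`
of the disk, where `g'` is bounded.
-/

namespace VolterraExample

open Complex Metric Set Filter Topology MeasureTheory

/-- The derivative of the symbol in the coordinate `ζ`. -/
noncomputable def G (ζ : ℂ) : ℂ := exp ((I * ζ / 2 - 1) * log ζ)

/-- The coordinate `ζ = 2 - log (1 + z)` on the unit disk. -/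
noncomputable def coord (z : ℂ) : ℂ := 2 - log (1 + z)

/-- The derivative of the symbol on the disk, `G ζ dζ / dz` up to sign. -/
noncomputable def h (z : ℂ) : ℂ := G (coord z) / (1 + z)

/-- The image of the unit disk under `coord`. -/
def U : Set ℂ := {ζ | |ζ.im| < Real.pi / 2 ∧ Real.exp (2 - ζ.re) < 2 * Real.cos ζ.im}

lemma one_le_re {ζ : ℂ} (hζ : ζ ∈ U) : 1 ≤ ζ.re := by
  by_contra! hlt
  have h1 : Real.exp (2 - ζ.re) < 2 := hζ.2.trans_le (by linarith [Real.cos_le_one ζ.im])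
  have h2 := Real.add_one_le_exp (2 - ζ.re)
  linarith

lemma norm_G (ζ : ℂ) : ‖G ζ‖ =
    Real.exp (-(1 + ζ.im / 2) * Real.log ‖ζ‖ - ζ.re * arg ζ / 2) := by
  unfold G
  rw [Complex.norm_exp]
  congr 1
  have : I * ζ / 2 = I * ζ * ((1 / 2 : ℝ) : ℂ) := by push_cast; ring
  rw [this]
  simp [Complex.log_re, Complex.log_im]
  ring

/-- Follows from `|arg ζ| ≤ |tan (arg ζ)| = |im ζ| / re ζ`. -/
lemma neg_re_mul_arg_le {ζ : ℂ} (hζ : 0 < ζ.re) (hi : |ζ.im| ≤ 2) : -(ζ.re * arg ζ / 2) ≤ 1 := by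
  rcases le_or_gt 0 (arg ζ) with ha | ha
  · have := mul_nonneg hζ.le ha
    linarith
  · have hlt : |arg ζ| < Real.pi / 2 := abs_arg_lt_pi_div_two_iff.2 (Or.inl hζ)
    rw [abs_of_neg ha] at hlt
    have h1 := Real.le_tan (x := -arg ζ) (by linarith) hlt
    rw [Real.tan_neg, tan_arg, ← neg_div, le_div_iff₀ hζ] at h1
    have := neg_le_abs ζ.im
    linarith

lemma norm_G_le {ζ : ℂ} (hre : 1 ≤ ζ.re) (hi : |ζ.im| ≤ 2) :
    ‖G ζ‖ ≤ Real.exp 1 * ζ.re ^ (-(1 + ζ.im / 2)) := by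
  have h0 : 0 < ζ.re := by linarith
  rw [norm_G, Real.rpow_def_of_pos h0, ← Real.exp_add, Real.exp_le_exp]
  have h1 := neg_re_mul_arg_le h0 hi
  have h2 : Real.log ζ.re ≤ Real.log ‖ζ‖ := Real.log_le_log h0 (re_le_norm ζ)
  have h3 : 0 ≤ 1 + ζ.im / 2 := by linarith [neg_le_of_abs_le hi]
  nlinarith [mul_le_mul_of_nonneg_left h2 h3]

lemma norm_G_le_exp_one {ζ : ℂ} (hζ : ζ ∈ U) : ‖G ζ‖ ≤ Real.exp 1 := by
  have hi : |ζ.im| ≤ 2 := by linarith [hζ.1, Real.pi_lt_four]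
  refine (norm_G_le (one_le_re hζ) hi).trans ?_
  have : ζ.re ^ (-(1 + ζ.im / 2)) ≤ 1 :=
    Real.rpow_le_one_of_one_le_of_nonpos (one_le_re hζ) (by linarith [neg_le_of_abs_le hi])
  nlinarith [Real.exp_pos 1]

lemma norm_G_ofReal {x : ℝ} (hx : 0 < x) : ‖G x‖ = x⁻¹ := by
  rw [norm_G]
  simp [arg_ofReal_of_nonneg hx.le, abs_of_pos hx, Real.exp_neg, Real.exp_log hx]

lemma re_pos_of_mem {z : ℂ} (hz : z ∈ ball (0 : ℂ) 1) : 0 < (1 + z).re := by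
  rw [mem_ball_zero_iff] at hz
  have := neg_le_of_abs_le (abs_re_le_norm z)
  simp only [add_re, one_re]
  linarith

lemma exp_coord {z : ℂ} (hz : z ∈ ball (0 : ℂ) 1) : exp (2 - coord z) = 1 + z := by
  have : (1 + z) ≠ 0 := fun h0 => by have := re_pos_of_mem hz; simp [h0] at this
  simp [coord, exp_log this]

lemma coord_mem {z : ℂ} (hz : z ∈ ball (0 : ℂ) 1) : coord z ∈ U := by
  have hpos := re_pos_of_mem hz
  have hne : (1 + z) ≠ 0 := fun h0 => by simp [h0] at hpos
  have hn : 0 < ‖1 + z‖ := norm_pos_iff.2 hne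
  have him : (coord z).im = -arg (1 + z) := by simp [coord, log_im]
  have hre : 2 - (coord z).re = Real.log ‖1 + z‖ := by simp [coord, log_re]
  refine ⟨?_, ?_⟩
  · rw [him, abs_neg]
    exact abs_arg_lt_pi_div_two_iff.2 (Or.inl hpos)
  · rw [him, hre, Real.exp_log hn, Real.cos_neg, cos_arg hne, ← mul_div_assoc, lt_div_iff₀ hn]
    have h1 : ‖z‖ ^ 2 < 1 := by
      rw [mem_ball_zero_iff] at hz
      nlinarith [norm_nonneg z]
    rw [← pow_two, ← normSq_eq_norm_sq, normSq_apply]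
    rw [← normSq_eq_norm_sq, normSq_apply] at h1
    simp only [add_re, one_re, add_im, one_im]
    nlinarith

lemma exp_sub_one_mem {ζ : ℂ} (hζ : ζ ∈ U) : exp (2 - ζ) - 1 ∈ ball (0 : ℂ) 1 := by
  rw [mem_ball_zero_iff, ← sq_lt_one_iff₀ (norm_nonneg _), ← normSq_eq_norm_sq, normSq_apply]
  simp only [sub_re, sub_im, exp_re, exp_im, one_re, one_im, re_ofNat, im_ofNat, zero_sub,
    Real.cos_neg, Real.sin_neg, sub_zero]
  have h1 := hζ.2
  have h2 := Real.exp_pos (2 - ζ.re)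
  have h3 := Real.sin_sq_add_cos_sq ζ.im
  set e := Real.exp (2 - ζ.re)
  have : (e * Real.cos ζ.im - 1) * (e * Real.cos ζ.im - 1)
      + e * -Real.sin ζ.im * (e * -Real.sin ζ.im)
      = e * e * (Real.sin ζ.im ^ 2 + Real.cos ζ.im ^ 2) - 2 * Real.cos ζ.im * e + 1 := by ring
  rw [this, h3]
  nlinarith

lemma coord_exp {ζ : ℂ} (hζ : ζ ∈ U) : coord (exp (2 - ζ) - 1) = ζ := by
  have hi := abs_lt.1 hζ.1
  have := Real.pi_pos
  rw [coord, add_sub_cancel, log_exp]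
  · ring
  · simp; linarith
  · simp; linarith

lemma differentiableOn_h : DifferentiableOn ℂ h (ball (0 : ℂ) 1) := by
  intro z hz
  have hpos := re_pos_of_mem hz
  have hne : (1 + z) ≠ 0 := fun h0 => by simp [h0] at hpos
  have hs : 1 + z ∈ slitPlane := Or.inl hpos
  have hs' : 2 - log (1 + z) ∈ slitPlane := Or.inl (by
    have := one_le_re (coord_mem hz)
    rw [coord] at this
    linarith)
  have h1 : DifferentiableAt ℂ (fun z : ℂ => 2 - log (1 + z)) z :=
    ((differentiableAt_id.const_add 1).clog hs).const_sub 2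
  have h2 : DifferentiableAt ℂ h z := by
    unfold h G coord
    exact (((((h1.const_mul I).div_const 2).sub_const 1).mul (h1.clog hs')).cexp).div
      (differentiableAt_id.const_add 1) hne
  exact h2.differentiableWithinAt

/-- The slices of `U` at fixed real part are intervals, symmetric about the real axis. -/
lemma slice_mem {x s t r : ℝ} (hs : (⟨x, s⟩ : ℂ) ∈ U) (ht : (⟨x, t⟩ : ℂ) ∈ U)
    (hr : r ∈ uIcc s t) : (⟨x, r⟩ : ℂ) ∈ U := by
  have key : ∀ u : ℝ, (⟨x, u⟩ : ℂ) ∈ U → |r| ≤ |u| → (⟨x, r⟩ : ℂ) ∈ U := by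
    intro u hu hru
    refine ⟨lt_of_le_of_lt hru hu.1, lt_of_lt_of_le hu.2 ?_⟩
    have hpi : |u| < Real.pi / 2 := hu.1
    have := Real.cos_le_cos_of_nonneg_of_le_pi (abs_nonneg r)
      (by linarith [Real.pi_pos]) hru
    rw [Real.cos_abs, Real.cos_abs] at this
    simpa using this
  have hmax : |r| ≤ max |s| |t| := by
    rcases mem_uIcc.1 hr with ⟨h1, h2⟩ | ⟨h1, h2⟩
    · exact abs_le_max_abs_abs h1 h2
    · rw [max_comm]; exact abs_le_max_abs_abs h1 h2
  rcases le_max_iff.1 hmax with h1 | h1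
  · exact key s hs h1
  · exact key t ht h1

lemma half_lt_cos_one : 1 / 2 < Real.cos 1 := by
  rw [← Real.cos_pi_div_three]
  have := Real.pi_gt_three
  exact Real.cos_lt_cos_of_nonneg_of_le_pi (by norm_num) (by linarith) (by linarith)

lemma line_mem {x y : ℝ} (hx : 2 ≤ x) (hy : 0 ≤ y) (hy1 : y ≤ 1) : (⟨x, y⟩ : ℂ) ∈ U := by
  have := Real.pi_gt_three
  refine ⟨by simp only [abs_of_nonneg hy]; linarith, ?_⟩
  have h1 : Real.exp (2 - x) ≤ 1 := Real.exp_le_one_iff.2 (by linarith)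
  have h2 := Real.cos_le_cos_of_nonneg_of_le_pi hy (by linarith) hy1
  have := half_lt_cos_one
  simp only
  linarith

lemma mk_eq (x y : ℝ) : (⟨x, y⟩ : ℂ) = x + y * I := mk_eq_add_mul_I x y

/-- Since `|G| ≤ exp 1`, vertical segments, whose length is bounded, cost a bounded amount. -/
lemma vertical {Φ φ : ℂ → ℂ} (hΦ : ∀ ζ ∈ U, HasDerivAt Φ (φ ζ) ζ)
    (hφ : ∀ ζ ∈ U, ‖φ ζ‖ ≤ ‖G ζ‖)
    {x s t : ℝ} (hs : (⟨x, s⟩ : ℂ) ∈ U) (ht : (⟨x, t⟩ : ℂ) ∈ U) :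
    ‖Φ ⟨x, t⟩ - Φ ⟨x, s⟩‖ ≤ Real.exp 1 * |t - s| := by
  have hd : ∀ r ∈ uIcc s t, HasDerivWithinAt (fun r : ℝ => Φ (⟨x, r⟩ : ℂ))
      (φ ⟨x, r⟩ * I) (uIcc s t) r := by
    intro r hr
    have h1 : HasDerivAt (fun r : ℝ => (⟨x, r⟩ : ℂ)) I r := by
      simp only [mk_eq]
      simpa using ((hasDerivAt_id r).ofReal_comp.mul_const I).const_add (x : ℂ)
    exact ((hΦ _ (slice_mem hs ht hr)).comp r h1).hasDerivWithinAt
  have := (convex_uIcc s t).norm_image_sub_le_of_norm_hasDerivWithin_le (C := Real.exp 1) hd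
    (fun r hr => by
      have hm := slice_mem hs ht hr
      simpa using (hφ _ hm).trans (norm_G_le_exp_one hm)) left_mem_uIcc right_mem_uIcc
  simpa using this

/-- On the line `im ζ = 1`, `|G|` is at most `exp 1 * x ^ (-3 / 2)`, whose integral over `[2, ∞)` is
finite. -/
lemma horizontal {Φ φ : ℂ → ℂ} (hΦ : ∀ ζ ∈ U, HasDerivAt Φ (φ ζ) ζ)
    (hφ : ∀ ζ ∈ U, ‖φ ζ‖ ≤ ‖G ζ‖)
    {x : ℝ} (hx : 2 ≤ x) :
    ‖Φ ⟨x, 1⟩ - Φ ⟨2, 1⟩‖ ≤ 2 * Real.exp 1 := by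
  have hd : ∀ t ∈ Icc 2 x, HasDerivAt (fun t : ℝ => Φ ⟨t, 1⟩ - Φ ⟨2, 1⟩) (φ ⟨t, 1⟩) t := by
    intro t ht
    have h1 : HasDerivAt (fun r : ℝ => (⟨r, 1⟩ : ℂ)) 1 t := by
      simp only [mk_eq]
      simpa using (hasDerivAt_id t).ofReal_comp.add_const ((1 : ℝ) * I)
    simpa using ((hΦ _ (line_mem ht.1 zero_le_one le_rfl)).comp t h1).sub_const (Φ ⟨2, 1⟩)
  have hB : ∀ t ∈ Icc 2 x, HasDerivAt (fun t : ℝ => Real.exp 1 * (2 - 2 * t ^ (-(1 / 2) : ℝ)))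
      (Real.exp 1 * t ^ (-(3 / 2) : ℝ)) t := by
    intro t ht
    have h0 : t ≠ 0 := by linarith [ht.1]
    have := (((Real.hasDerivAt_rpow_const (p := (-(1 / 2) : ℝ)) (Or.inl h0)).const_mul 2).const_sub
      2).const_mul (Real.exp 1)
    refine this.congr_deriv ?_
    rw [show (-(1 / 2) - 1 : ℝ) = -(3 / 2) by norm_num]
    ring
  have key := image_norm_le_of_norm_deriv_right_le_deriv_boundary'
    (fun t ht => (hd t ht).continuousAt.continuousWithinAt)
    (fun t ht => (hd t (Ico_subset_Icc_self ht)).hasDerivWithinAt)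
    (a := 2) (b := x) (B := fun t : ℝ => Real.exp 1 * (2 - 2 * t ^ (-(1 / 2) : ℝ)))
    (B' := fun t => Real.exp 1 * t ^ (-(3 / 2) : ℝ))
    (by
      have : (2 : ℝ) ^ (-(1 / 2) : ℝ) ≤ 1 :=
        Real.rpow_le_one_of_one_le_of_nonpos (by norm_num) (by norm_num)
      simp only [sub_self, norm_zero]
      have := Real.exp_pos 1
      apply mul_nonneg this.le
      linarith)
    (fun t ht => (hB t ht).continuousAt.continuousWithinAt)
    (fun t ht => (hB t (Ico_subset_Icc_self ht)).hasDerivWithinAt)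
    (fun t ht => by
      have hm := line_mem ht.1 zero_le_one le_rfl
      refine (hφ _ hm).trans ((norm_G_le (one_le_re hm) (by norm_num)).trans_eq ?_)
      norm_num)
    (right_mem_Icc.2 hx)
  refine key.trans ?_
  have h1 : 0 ≤ x ^ (-(1 / 2) : ℝ) := Real.rpow_nonneg (by linarith) _
  nlinarith [Real.exp_pos 1]

/-- The three-step path from the base point `2` to a point with real part at least `2`. -/
lemma path_bound {Φ φ : ℂ → ℂ} (hΦ : ∀ ζ ∈ U, HasDerivAt Φ (φ ζ) ζ)
    (hφ : ∀ ζ ∈ U, ‖φ ζ‖ ≤ ‖G ζ‖)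
    {ζ : ℂ} (hζ : ζ ∈ U) (hx : 2 ≤ ζ.re) : ‖Φ ζ - Φ 2‖ ≤ 6 * Real.exp 1 := by
  have h1 := vertical hΦ hφ (line_mem (le_refl 2) (le_refl 0) zero_le_one)
    (line_mem (le_refl 2) zero_le_one le_rfl)
  have h2 := horizontal hΦ hφ hx
  have h3 := vertical hΦ hφ (line_mem hx zero_le_one le_rfl) (t := ζ.im) hζ
  have h4 : |ζ.im - 1| ≤ 3 := by
    have := abs_lt.1 hζ.1
    have := Real.pi_lt_four
    rw [abs_le]
    constructor <;> linarith
  have h5 : (⟨2, 0⟩ : ℂ) = 2 := by apply Complex.ext <;> simp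
  rw [h5] at h1
  have h6 : Φ ζ - Φ 2 = (Φ ⟨ζ.re, ζ.im⟩ - Φ ⟨ζ.re, 1⟩) + (Φ ⟨ζ.re, 1⟩ - Φ ⟨2, 1⟩)
      + (Φ ⟨2, 1⟩ - Φ 2) := by
    simp
  rw [h6]
  refine (norm_add₃_le).trans ?_
  simp only [sub_zero, abs_one, mul_one] at h1
  nlinarith [Real.exp_pos 1]

lemma norm_h_le {z : ℂ} (hz : z ∈ ball (0 : ℂ) 1) (hre : -(1 / 2) < z.re) :
    ‖h z‖ ≤ 2 * Real.exp 1 := by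
  have h1 := norm_G_le_exp_one (coord_mem hz)
  have h2 : 1 / 2 ≤ ‖1 + z‖ := by
    refine le_trans ?_ (re_le_norm _)
    simp only [add_re, one_re]
    linarith
  rw [h, norm_div, div_le_iff₀ (by linarith)]
  nlinarith [Real.exp_pos 1]

/-- Any primitive of `f h` with `|f| ≤ 1` is bounded by a universal constant. -/
lemma primitive_bound {f F : ℂ → ℂ} (hf : ∀ z ∈ ball (0 : ℂ) 1, ‖f z‖ ≤ 1) (hF0 : F 0 = 0)
    (hF : ∀ z ∈ ball (0 : ℂ) 1, HasDerivAt F (f z * h z) z) {w : ℂ} (hw : w ∈ ball (0 : ℂ) 1) :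
    ‖F w‖ ≤ 6 * Real.exp 1 := by
  have he := Real.exp_pos 1
  by_cases hre : -(1 / 2) < w.re
  · have hconv : Convex ℝ (ball (0 : ℂ) 1 ∩ {z | -(1 / 2) < z.re}) :=
      (convex_ball _ _).inter (convex_halfSpace_re_gt _)
    have := hconv.norm_image_sub_le_of_norm_hasDerivWithin_le (C := 2 * Real.exp 1)
      (fun z hz => (hF z hz.1).hasDerivWithinAt)
      (fun z hz => by
        rw [norm_mul]
        have h1 := hf z hz.1
        have h2 := norm_h_le hz.1 hz.2
        nlinarith [norm_nonneg (h z), norm_nonneg (f z)])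
      (x := 0) (y := w) ⟨by simp, by simp⟩ ⟨hw, hre⟩
    rw [hF0, sub_zero, sub_zero] at this
    rw [mem_ball_zero_iff] at hw
    nlinarith
  · have hx : 2 ≤ (coord w).re := by
      have h1 : ‖1 + w‖ ≤ 1 := by
        rw [← sq_le_one_iff₀ (norm_nonneg _), ← normSq_eq_norm_sq, normSq_apply]
        have h1 : ‖w‖ ^ 2 < 1 := by
          rw [mem_ball_zero_iff] at hw
          nlinarith [norm_nonneg w]
        rw [← normSq_eq_norm_sq, normSq_apply] at h1
        simp only [add_re, one_re, add_im, one_im]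
        nlinarith
      have h2 := Real.log_nonpos (norm_nonneg _) h1
      simp only [coord, sub_re, re_ofNat, log_re]
      linarith
    have key := path_bound (Φ := fun ζ => F (exp (2 - ζ) - 1))
      (φ := fun ζ => f (exp (2 - ζ) - 1) * h (exp (2 - ζ) - 1) * (-exp (2 - ζ)))
      (fun ζ hζ => by
        have h1 : HasDerivAt (fun ζ : ℂ => exp (2 - ζ) - 1) (-exp (2 - ζ)) ζ := by
          simpa using (((hasDerivAt_id ζ).const_sub 2).cexp).sub_const 1
        exact (hF _ (exp_sub_one_mem hζ)).comp ζ h1)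
      (fun ζ hζ => by
        have h1 := hf _ (exp_sub_one_mem hζ)
        have h2 : h (exp (2 - ζ) - 1) * (-exp (2 - ζ)) = -G ζ := by
          rw [h, coord_exp hζ, add_sub_cancel]
          field_simp [exp_ne_zero (2 - ζ)]
        rw [mul_assoc, h2, norm_mul, norm_neg]
        nlinarith [norm_nonneg (G ζ)])
      (coord_mem hw) hx
    simpa [exp_coord hw, hF0] using key

lemma norm_h_neg {r : ℝ} (h0 : 0 < r) (h1 : r < 1) :
    ‖h (-(r : ℂ))‖ = ((2 - Real.log (1 - r)) * (1 - r))⁻¹ := by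
  have hr : 0 < 1 - r := by linarith
  have hl : Real.log (1 - r) ≤ 0 := Real.log_nonpos hr.le (by linarith)
  have h2 : (1 : ℂ) + -(r : ℂ) = ((1 - r : ℝ) : ℂ) := by push_cast; ring
  have h3 : coord (-(r : ℂ)) = ((2 - Real.log (1 - r) : ℝ) : ℂ) := by
    rw [coord, h2, ← ofReal_log hr.le]
    push_cast
    rfl
  rw [h, h3, h2, norm_div, norm_G_ofReal (by linarith), norm_real, Real.norm_of_nonneg hr.le,
    mul_inv, div_eq_mul_inv]

/-- The function `log (2 - log (1 - r))` is an unbounded primitive of `|h (-r)|`. -/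
lemma lintegral_h : (∫⁻ r in Ioo (0 : ℝ) 1, (‖h (-(r : ℂ))‖₊ : ENNReal)) = ⊤ := by
  by_contra hne
  have hmem : Ioo (0 : ℝ) 1 ∈ 𝓝[<] (1 : ℝ) := Ioo_mem_nhdsLT zero_lt_one
  have hderiv : ∀ r ∈ Ioo (0 : ℝ) 1, HasDerivAt (fun r : ℝ => Real.log (2 - Real.log (1 - r)))
      (((2 - Real.log (1 - r)) * (1 - r))⁻¹) r := by
    intro r hr
    have h1 : 0 < 1 - r := by linarith [hr.2]
    have hl : Real.log (1 - r) ≤ 0 := Real.log_nonpos h1.le (by linarith [hr.1])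
    have h2 : 2 - Real.log (1 - r) ≠ 0 := by linarith
    have := ((((hasDerivAt_id r).const_sub 1).log h1.ne').const_sub 2).log h2
    refine this.congr_deriv ?_
    have h3 := h1.ne'
    simp only [id]
    field_simp
  have hlim : Tendsto (fun r : ℝ => ‖Real.log (2 - Real.log (1 - r))‖) (𝓝[<] 1) atTop := by
    refine tendsto_norm_atTop_atTop.comp (Real.tendsto_log_atTop.comp ?_)
    have h1 : Tendsto (fun r : ℝ => 1 - r) (𝓝[<] 1) (𝓝[>] 0) := by
      refine tendsto_nhdsWithin_iff.2 ⟨?_, ?_⟩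
      · have : Tendsto (fun r : ℝ => 1 - r) (𝓝 1) (𝓝 (1 - 1)) :=
          (continuous_const.sub continuous_id).tendsto 1
        rw [sub_self] at this
        exact this.mono_left nhdsWithin_le_nhds
      · filter_upwards [self_mem_nhdsWithin] with r hr
        exact sub_pos.2 (mem_Iio.1 hr)
    have h2 := tendsto_neg_atBot_atTop.comp (Real.tendsto_log_nhdsGT_zero.comp h1)
    simpa [sub_eq_add_neg, Function.comp_def] using tendsto_atTop_add_const_left _ (2 : ℝ) h2
  refine not_integrableOn_of_tendsto_norm_atTop_of_deriv_isBigO_filter (𝓝[<] (1 : ℝ)) hmem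
    (g := fun r : ℝ => h (-(r : ℂ))) ?_ hlim ?_ ?_
  · filter_upwards [hmem] with r hr using (hderiv r hr).differentiableAt
  · refine Asymptotics.IsBigO.of_bound 1 ?_
    filter_upwards [hmem] with r hr
    rw [(hderiv r hr).deriv, norm_h_neg hr.1 hr.2, Real.norm_of_nonneg, one_mul]
    rw [← norm_h_neg hr.1 hr.2]
    exact norm_nonneg _
  · refine ⟨?_, lt_top_iff_ne_top.2 hne⟩
    refine ContinuousOn.aestronglyMeasurable ?_ measurableSet_Ioo
    refine differentiableOn_h.continuousOn.comp (by fun_prop) ?_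
    intro r hr
    simp [abs_of_pos hr.1, hr.2]

end VolterraExample

/-- There is an analytic `g` on the unit disk whose Volterra operator `T_g` is bounded on
`H^∞(𝔻)` (formulated via primitives `F` of `f·g'`), while `g` has infinite variation along
the radius `(-1,0]`; hence `BRV ⊊ T[H^∞]`. -/
theorem Tg_bounded_without_brv :
    ∃ g : ℂ → ℂ, DifferentiableOn ℂ g (Metric.ball (0:ℂ) 1) ∧
      (∃ C : ℝ, ∀ f : ℂ → ℂ, DifferentiableOn ℂ f (Metric.ball (0:ℂ) 1) →
        (∀ z ∈ Metric.ball (0:ℂ) 1, ‖f z‖ ≤ 1) →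
        ∀ F : ℂ → ℂ, F 0 = 0 →
          (∀ z ∈ Metric.ball (0:ℂ) 1, HasDerivAt F (f z * deriv g z) z) →
          ∀ w ∈ Metric.ball (0:ℂ) 1, ‖F w‖ ≤ C) ∧
      (∫⁻ r in Set.Ioo (0:ℝ) 1, (‖deriv g (-(r:ℂ))‖₊ : ENNReal)) = ⊤ := by
  open VolterraExample in
  obtain ⟨g, hg⟩ := differentiableOn_h.isExactOn_ball
  have hd : ∀ z ∈ Metric.ball (0 : ℂ) 1, deriv g z = h z := fun z hz => (hg z hz).deriv
  refine ⟨g, fun z hz => (hg z hz).differentiableAt.differentiableWithinAt,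
    ⟨6 * Real.exp 1, fun f _ hf F hF0 hF w hw => primitive_bound hf hF0
      (fun z hz => by simpa only [hd z hz] using hF z hz) hw⟩, ?_⟩
  rw [← lintegral_h]
  refine MeasureTheory.setLIntegral_congr_fun measurableSet_Ioo fun r hr => ?_
  rw [hd]
  simp [abs_of_pos hr.1, hr.2]
end

section
/- Let Ω = {x + iy ∈ ℂ : x < log(2 cos y), |y| < π/2}. There exists a bounded analytic function f on Ω such that ∫_{−∞}^0 |f(ξ)| dξ = +∞ (the integral along the negative real half-line, which is contained in Ω), and yet there is a constant C such that for every ζ < 0 and every analytic h on Ω with |h| ≤ 1 on Ω, one has |∫_ζ^0 f(ξ) h(ξ) dξ| ≤ C, the integral taken over the real segment [ζ, 0]. -/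
/-!
In the coordinate `w = 2 - z`, which has real part `> 1` on `Ω`, take
`f = w⁻¹ * exp ((i / 2) * w * log w)`. Writing `w = u + i v`, one has
`log ‖f‖ = -(u * arg w + v * log ‖w‖) / 2 - log ‖w‖`.

* On `Ω`, `|v| < π / 2 < 2` and `|u * arg w| ≤ |v|` (since `|θ| ≤ |tan θ|`), so `‖f‖ ≤ e`.
* On the real axis `‖f‖ = 1 / (2 - x)`, which has infinite integral over `(-∞, 0)`.
* On the line `y = -1`, that is `v = 1`, the oscillating factor decays and `‖f‖ ≤ u ^ (-3 / 2)`,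
  which is integrable.

Cauchy's theorem on the rectangle `[ζ, 0] × [-1, 0] ⊆ Ω` moves `∫_ζ^0 f h` to the line `y = -1`
at the cost of two vertical sides of length one, and every piece is bounded independently of
`ζ` and `h`.
-/

/-- The domain `Ω = {x + iy : x < log(2 cos y), |y| < π/2}`. -/
noncomputable def OmegaDom : Set ℂ :=
  {z : ℂ | z.re < Real.log (2 * Real.cos z.im) ∧ |z.im| < Real.pi / 2}

/-- The function `z ↦ w⁻¹ * exp ((i / 2) * w * log w)` with `w = 2 - z`, written as a single
exponential. -/
noncomputable def oscFun (z : ℂ) : ℂ :=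
  Complex.exp (Complex.I / 2 * ((2 - z) * Complex.log (2 - z)) - Complex.log (2 - z))

lemma oscFun_norm (z : ℂ) : ‖oscFun z‖ =
    Real.exp (-((2 - z.re) * (2 - z).arg + (-z.im) * Real.log ‖2 - z‖) / 2
      - Real.log ‖2 - z‖) := by
  rw [oscFun, Complex.norm_exp]
  congr 1
  have h : Complex.I / 2 * ((2 - z) * Complex.log (2 - z))
      = ((1 / 2 : ℝ) : ℂ) * (Complex.I * ((2 - z) * Complex.log (2 - z))) := by
    push_cast; ring
  rw [h, Complex.sub_re, Complex.re_ofReal_mul, Complex.I_mul_re, Complex.mul_im,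
    Complex.log_re, Complex.log_im]
  simp
  ring

lemma OmegaDom_re_lt {z : ℂ} (hz : z ∈ OmegaDom) : z.re < 1 := by
  obtain ⟨h1, h2⟩ := hz
  have hc : 0 < Real.cos z.im := Real.cos_pos_of_mem_Ioo (by constructor <;> grind)
  have : Real.log (2 * Real.cos z.im) ≤ 2 * Real.cos z.im - 1 :=
    Real.log_le_sub_one_of_pos (by positivity)
  linarith [Real.cos_le_one z.im]

lemma oscFun_differentiableOn : DifferentiableOn ℂ oscFun OmegaDom := by
  intro z hz
  have : (2 - z) ∈ Complex.slitPlane := by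
    left
    have := OmegaDom_re_lt hz
    simp
    linarith
  have hl : DifferentiableAt ℂ (fun z : ℂ => Complex.log (2 - z)) z :=
    DifferentiableAt.clog (by fun_prop) this
  have : DifferentiableAt ℂ oscFun z := by
    unfold oscFun
    fun_prop
  exact this.differentiableWithinAt

/-- The bound `|u * θ| ≤ |v|` for `u + iv` of argument `θ`: with `u > 0` it is `|θ| ≤ |tan θ|`. -/
lemma abs_re_mul_arg_le {w : ℂ} (hw : 0 < w.re) : |w.re * w.arg| ≤ |w.im| := by
  have h1 : |w.arg| < Real.pi / 2 := Complex.abs_arg_lt_pi_div_two_iff.2 (Or.inl hw)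
  have h2 : |w.arg| ≤ |w.im / w.re| := by
    have h3 := Real.le_tan (abs_nonneg _) h1
    rw [← Complex.tan_arg]
    refine h3.trans ?_
    rcases abs_choice w.arg with h | h <;> rw [h]
    · exact le_abs_self _
    · rw [Real.tan_neg]; exact neg_le_abs _
  rw [abs_div, abs_of_pos hw, le_div_iff₀ hw] at h2
  rw [abs_mul, abs_of_pos hw]
  linarith

lemma log_re_le {z : ℂ} (hz : z.re < 1) : Real.log (2 - z.re) ≤ Real.log ‖2 - z‖ := by
  have h := Complex.re_le_norm (2 - z)
  simp only [Complex.sub_re, Complex.re_ofNat] at h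
  exact Real.log_le_log (by linarith) h

lemma oscFun_bound {z : ℂ} (hz : z ∈ OmegaDom) : ‖oscFun z‖ ≤ Real.exp 1 := by
  rw [oscFun_norm]
  apply Real.exp_le_exp.2
  have h1 := OmegaDom_re_lt hz
  have hv : |z.im| < 2 := by linarith [hz.2, Real.pi_lt_four]
  have h2 := abs_re_mul_arg_le (w := 2 - z) (by simp; linarith)
  have hL : 0 ≤ Real.log ‖2 - z‖ :=
    (Real.log_nonneg (by linarith)).trans (log_re_le h1)
  simp only [Complex.sub_re, Complex.re_ofNat, Complex.sub_im, Complex.im_ofNat, zero_sub,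
    abs_neg] at h2
  have h3 := neg_abs_le ((2 - z.re) * (2 - z).arg)
  have h4 : z.im * Real.log ‖2 - z‖ ≤ 2 * Real.log ‖2 - z‖ :=
    mul_le_mul_of_nonneg_right ((le_abs_self _).trans hv.le) hL
  linarith

lemma oscFun_bound_line {x : ℝ} (hx : x ≤ 0) :
    ‖oscFun (x + ((-1 : ℝ) : ℂ) * Complex.I)‖ ≤ (2 - x) ^ (-(3 / 2) : ℝ) := by
  set z : ℂ := x + ((-1 : ℝ) : ℂ) * Complex.I with hz
  have hre : z.re = x := by simp [hz]
  have him : z.im = -1 := by simp [hz]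
  rw [oscFun_norm, Real.rpow_def_of_pos (by linarith)]
  apply Real.exp_le_exp.2
  have h1 := log_re_le (z := z) (by linarith)
  have h2 : 0 ≤ (2 - z).arg := Complex.arg_nonneg_iff.2 (by simp [him])
  rw [hre] at h1 ⊢
  rw [him]
  nlinarith [mul_nonneg (by linarith : 0 ≤ 2 - x) h2]

lemma oscFun_real {x : ℝ} (hx : x < 0) : ‖oscFun x‖ = (2 - x)⁻¹ := by
  have h : (2 - (x : ℂ)) = ((2 - x : ℝ) : ℂ) := by push_cast; rfl
  have hp : 0 < 2 - x := by linarith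
  rw [oscFun_norm, h, Complex.arg_ofReal_of_nonneg hp.le, Complex.norm_of_nonneg hp.le]
  simp [Real.exp_neg, Real.exp_log hp]

lemma oscFun_lintegral :
    (∫⁻ ξ in Set.Iio (0:ℝ), (‖oscFun (ξ:ℂ)‖₊ : ENNReal)) = ⊤ := by
  by_contra hne
  have h1 : (∫⁻ ξ in Set.Iio (0:ℝ), (‖oscFun (ξ:ℂ)‖₊ : ENNReal))
      = ∫⁻ ξ in Set.Iio (0:ℝ), ‖(2 - ξ)⁻¹‖ₑ := by
    refine MeasureTheory.setLIntegral_congr_fun measurableSet_Iio fun x hx => ?_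
    have hx' : x < 0 := hx
    change ‖oscFun (x:ℂ)‖ₑ = _
    rw [← ofReal_norm, oscFun_real hx', Real.enorm_of_nonneg (by
      have : 0 < 2 - x := by linarith
      positivity)]
  have h2 : MeasureTheory.IntegrableOn (fun x : ℝ => (2 - x)⁻¹) (Set.Iio 0) := by
    refine ⟨by fun_prop, ?_⟩
    rw [MeasureTheory.hasFiniteIntegral_iff_enorm, ← h1]
    exact lt_top_iff_ne_top.2 hne
  have h3 := (MeasureTheory.Measure.measurePreserving_sub_left
    (MeasureTheory.volume : MeasureTheory.Measure ℝ) 2).integrableOn_comp_preimage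
    (Homeomorph.subLeft (2:ℝ)).measurableEmbedding (f := fun x : ℝ => x⁻¹) (s := Set.Ioi 2)
  refine not_integrableOn_Ioi_inv (h3.1 ?_)
  have h4 : (fun x : ℝ => 2 - x) ⁻¹' Set.Ioi 2 = Set.Iio 0 := by
    ext x; simp
  rw [h4]
  exact h2

/-- The half-strip `x ≤ 0`, `-1 ≤ y ≤ 0` lies in `Ω`, because `2 cos y > 1` for `|y| ≤ 1 < π / 3`. -/
lemma mem_OmegaDom_of_rect {z : ℂ} (hx : z.re ≤ 0) (hy : z.im ∈ Set.Icc (-1) 0) :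
    z ∈ OmegaDom := by
  have hy1 : |z.im| ≤ 1 := abs_le.2 ⟨hy.1, by linarith [hy.2]⟩
  have hpi := Real.pi_gt_three
  refine ⟨hx.trans_lt (Real.log_pos ?_), by linarith⟩
  have := Real.cos_lt_cos_of_nonneg_of_le_pi (abs_nonneg z.im)
    (by linarith : Real.pi / 3 ≤ Real.pi) (by linarith)
  rw [Real.cos_pi_div_three, Real.cos_abs] at this
  linarith

lemma integral_rpow_line_le {ζ : ℝ} (hζ : ζ < 0) :
    ∫ x in ζ..(0:ℝ), (2 - x) ^ (-(3 / 2) : ℝ) ≤ 2 := by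
  rw [intervalIntegral.integral_comp_sub_left (fun u : ℝ => u ^ (-(3 / 2) : ℝ)) 2, integral_rpow]
  · have h1 : (0:ℝ) ≤ (2 - ζ) ^ (-(3 / 2) + 1 : ℝ) := Real.rpow_nonneg (by linarith) _
    have h2 : (2 - 0 : ℝ) ^ (-(3 / 2) + 1 : ℝ) ≤ 1 :=
      Real.rpow_le_one_of_one_le_of_nonpos (by norm_num) (by norm_num)
    rw [div_le_iff_of_neg (by norm_num)]
    linarith
  · right
    refine ⟨by norm_num, fun h => ?_⟩
    rw [Set.uIcc_of_le (by linarith)] at h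
    linarith [h.1]

/-- There is a bounded analytic `f` on `Ω` with `∫_{-∞}^0 |f| = ∞`, yet
`|∫_ζ^0 f h| ≤ C` uniformly over `ζ < 0` and `h ∈ H^∞(Ω)` with `|h| ≤ 1`. -/
theorem exists_bounded_analytic_infinite_variation :
    ∃ f : ℂ → ℂ, DifferentiableOn ℂ f OmegaDom ∧
      (∃ M : ℝ, ∀ z ∈ OmegaDom, ‖f z‖ ≤ M) ∧
      (∫⁻ ξ in Set.Iio (0:ℝ), (‖f (ξ:ℂ)‖₊ : ENNReal)) = ⊤ ∧
      ∃ C : ℝ, ∀ ζ : ℝ, ζ < 0 → ∀ h : ℂ → ℂ, DifferentiableOn ℂ h OmegaDom →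
        (∀ z ∈ OmegaDom, ‖h z‖ ≤ 1) →
        ‖∫ ξ in ζ..(0:ℝ), f (ξ:ℂ) * h (ξ:ℂ)‖ ≤ C := by
  refine ⟨oscFun, oscFun_differentiableOn, ⟨_, fun z hz => oscFun_bound hz⟩, oscFun_lintegral,
    2 + Real.exp 1 + Real.exp 1, fun ζ hζ h hh hb => ?_⟩
  have key := Complex.integral_boundary_rect_eq_zero_of_differentiableOn
    (fun z => oscFun z * h z) (⟨ζ, -1⟩ : ℂ) 0 (by
      refine (oscFun_differentiableOn.mul hh).mono fun z hz => ?_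
      rw [Complex.mem_reProdIm] at hz
      simp only [Complex.zero_re, Complex.zero_im] at hz
      rw [Set.uIcc_of_le hζ.le, Set.uIcc_of_le (by norm_num)] at hz
      exact mem_OmegaDom_of_rect hz.1.2 hz.2)
  simp only [Complex.zero_re, Complex.zero_im] at key
  have hprod : ∀ z ∈ OmegaDom, ‖oscFun z * h z‖ ≤ ‖oscFun z‖ := fun z hz => by
    rw [norm_mul]
    exact mul_le_of_le_one_right (norm_nonneg _) (hb z hz)
  have hside : ∀ a : ℝ, a ≤ 0 →
      ‖∫ y in (-1:ℝ)..0, oscFun (a + y * Complex.I) * h (a + y * Complex.I)‖ ≤ Real.exp 1 := by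
    intro a ha
    have := intervalIntegral.norm_integral_le_of_norm_le_const (a := (-1:ℝ)) (b := 0)
      (C := Real.exp 1)
      (f := fun y : ℝ => oscFun (a + y * Complex.I) * h (a + y * Complex.I)) (by
        intro y hy
        rw [Set.uIoc_of_le (by norm_num)] at hy
        have hz : (a + y * Complex.I : ℂ) ∈ OmegaDom :=
          mem_OmegaDom_of_rect (by simpa using ha) (by simpa using ⟨hy.1.le, hy.2⟩)
        exact (hprod _ hz).trans (oscFun_bound hz))
    simpa using this
  have hbot : ‖∫ x in ζ..(0:ℝ), oscFun (x + ((-1:ℝ):ℂ) * Complex.I)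
      * h (x + ((-1:ℝ):ℂ) * Complex.I)‖ ≤ 2 := by
    refine (intervalIntegral.norm_integral_le_of_norm_le hζ.le
      (g := fun x => (2 - x) ^ (-(3 / 2) : ℝ)) (Filter.Eventually.of_forall fun x hx => ?_)
      ?_).trans (integral_rpow_line_le hζ)
    · exact (hprod _ (mem_OmegaDom_of_rect (by simpa using hx.2) (by simp))).trans
        (oscFun_bound_line hx.2)
    · refine ContinuousOn.intervalIntegrable fun x hx => ?_
      rw [Set.uIcc_of_le hζ.le] at hx
      refine ContinuousAt.continuousWithinAt ?_
      exact ContinuousAt.rpow_const (by fun_prop) (Or.inl (by linarith [hx.2]))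
  have hl := hside ζ hζ.le
  have hr := hside 0 le_rfl
  have htop : ∫ ξ in ζ..(0:ℝ), oscFun (ξ:ℂ) * h (ξ:ℂ)
      = (∫ x in ζ..(0:ℝ), oscFun (x + ((-1:ℝ):ℂ) * Complex.I) * h (x + ((-1:ℝ):ℂ) * Complex.I))
        + Complex.I • (∫ y in (-1:ℝ)..0, oscFun ((0:ℝ) + y * Complex.I)
            * h ((0:ℝ) + y * Complex.I))
        - Complex.I • (∫ y in (-1:ℝ)..0, oscFun (ζ + y * Complex.I)
            * h (ζ + y * Complex.I)) := by
    simp only [Complex.ofReal_zero, zero_mul, add_zero] at key ⊢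
    linear_combination -key
  rw [htop]
  refine (norm_sub_le _ _).trans (add_le_add ((norm_add_le _ _).trans (add_le_add hbot ?_)) ?_)
  · rwa [norm_smul, Complex.norm_I, one_mul]
  · rwa [norm_smul, Complex.norm_I, one_mul]
end

section
/- For k ≥ 2 set λ_k = (log k + log log k)/2, a_k = e^{−2λ_k} = 1/(k log k), and ζ_k = −2^k. Then the series f(ξ) = Σ_{k=2}^∞ a_k e^{iλ_k(ξ − ζ_k)} e^{−(ξ − ζ_k)²} converges locally uniformly on Ω = {x + iy ∈ ℂ : x < log(2 cos y), |y| < π/2}, defines an analytic function on Ω, and f is bounded on Ω: sup_{ξ∈Ω} |f(ξ)| < ∞. -/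
/-- `λ_k = (log k + log log k)/2`. -/
noncomputable def lamSeq (k : ℕ) : ℝ := (Real.log k + Real.log (Real.log k)) / 2

/-- `a_k = e^{-2λ_k} = 1/(k log k)`. -/
noncomputable def aSeq (k : ℕ) : ℝ := 1 / (k * Real.log k)

/-- `ζ_k = -2^k`. -/
noncomputable def zSeq (k : ℕ) : ℝ := -(2:ℝ) ^ k

/-- The `k`-th term `a_k e^{iλ_k(ξ - ζ_k)} e^{-(ξ - ζ_k)²}` of the series defining `f`. -/
noncomputable def fterm (k : ℕ) (ξ : ℂ) : ℂ :=
  (aSeq k : ℂ) * Complex.exp (Complex.I * (lamSeq k : ℂ) * (ξ - (zSeq k : ℂ))) *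
    Complex.exp (-(ξ - (zSeq k : ℂ))^2)


open Filter Topology

lemma one_le_mul_log (k : ℕ) (hk : 2 ≤ k) : 1 ≤ (k : ℝ) * Real.log k := by
  have h2 : (2 : ℝ) ≤ k := by exact_mod_cast hk
  have hl : Real.log 2 ≤ Real.log k := Real.log_le_log (by norm_num) h2
  nlinarith [Real.log_two_gt_d9]

lemma two_mul_lamSeq (k : ℕ) (hk : 2 ≤ k) : 2 * lamSeq k = Real.log (k * Real.log k) := by
  have h2 : (2 : ℝ) ≤ k := by exact_mod_cast hk
  rw [Real.log_mul (by positivity) (Real.log_pos (by linarith)).ne', lamSeq]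
  ring

lemma lamSeq_nonneg (k : ℕ) (hk : 2 ≤ k) : 0 ≤ lamSeq k := by
  have := Real.log_nonneg (one_le_mul_log k hk)
  rw [← two_mul_lamSeq k hk] at this
  linarith

lemma aSeq_eq_exp (k : ℕ) (hk : 2 ≤ k) : aSeq k = Real.exp (-(2 * lamSeq k)) := by
  have := one_le_mul_log k hk
  rw [two_mul_lamSeq k hk, Real.exp_neg, Real.exp_log (by linarith), aSeq, one_div]

/-- Exponential bound for the terms (a weakening of a Gaussian one), uniform over the strip `|Im ξ| < π/2`. -/
lemma norm_fterm_le (k : ℕ) (hk : 2 ≤ k) (ξ : ℂ) (hξ : |ξ.im| < Real.pi / 2) :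
    ‖fterm k ξ‖ ≤ Real.exp ((Real.pi / 2) ^ 2 + 1) * Real.exp (-|ξ.re + 2 ^ k|) := by
  have hre1 : (Complex.I * (lamSeq k : ℂ) * (ξ - (zSeq k : ℂ))).re = -(lamSeq k * ξ.im) := by
    simp
  have hre2 : (-(ξ - (zSeq k : ℂ)) ^ 2).re = ξ.im ^ 2 - (ξ.re + 2 ^ k) ^ 2 := by
    have h : ξ - (zSeq k : ℂ) = ⟨ξ.re + 2 ^ k, ξ.im⟩ := by
      apply Complex.ext <;> simp [zSeq, -Complex.ofReal_neg, -Complex.ofReal_pow]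
    rw [h, pow_two, Complex.neg_re, Complex.mul_re]
    ring
  have hy : -2 < ξ.im := by
    have := (abs_lt.1 hξ).1
    linarith [Real.pi_lt_four]
  have hsq : ξ.im ^ 2 ≤ (Real.pi / 2) ^ 2 := by
    rw [← sq_abs]
    gcongr
  have ht : |ξ.re + 2 ^ k| ≤ (ξ.re + 2 ^ k) ^ 2 + 1 := by
    rw [← sq_abs (ξ.re + 2 ^ k)]
    nlinarith [sq_nonneg (|ξ.re + 2 ^ k| - 1 / 2)]
  rw [fterm, norm_mul, norm_mul, Complex.norm_exp, Complex.norm_exp, hre1, hre2,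
    Complex.norm_real, aSeq_eq_exp k hk, Real.norm_eq_abs, Real.abs_exp, ← Real.exp_add,
    ← Real.exp_add, ← Real.exp_add]
  apply Real.exp_le_exp.2
  nlinarith [mul_nonneg (lamSeq_nonneg k hk) (by linarith : (0 : ℝ) ≤ 2 + ξ.im)]

lemma sub_le_two_pow_sub {a b : ℕ} (h : a ≤ b) : (b : ℝ) - a ≤ 2 ^ b - 2 ^ a := by
  obtain ⟨c, rfl⟩ := Nat.exists_eq_add_of_le h
  have h1 : (c : ℝ) + 1 ≤ 2 ^ c := by exact_mod_cast Nat.lt_two_pow_self (n := c)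
  have h2 : (1 : ℝ) ≤ 2 ^ a := one_le_pow₀ (by norm_num)
  push_cast
  rw [pow_add]
  nlinarith [Nat.cast_nonneg (α := ℝ) c]

/-- Seen from any real point `-x`, the points `2^k` are separated like the integers. The integer
`m` is the dyadic exponent of `-x`, or `0` if `-x < 1`. -/
lemma exists_int_sub_le (x : ℝ) : ∃ m : ℤ, ∀ k : ℕ, |(k : ℝ) - m| - 1 ≤ |x + 2 ^ k| := by
  rcases lt_or_ge (-x) 1 with hx | hx
  · refine ⟨0, fun k => ?_⟩
    have := sub_le_two_pow_sub (Nat.zero_le k)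
    have h0 := le_abs_self (x + 2 ^ k)
    simp only [Int.cast_zero, sub_zero, Nat.abs_cast]
    simp only [Nat.cast_zero, pow_zero] at this
    linarith
  · obtain ⟨m, hm1, hm2⟩ := exists_nat_pow_near hx (by norm_num : (1 : ℝ) < 2)
    refine ⟨m, fun k => ?_⟩
    rw [Int.cast_natCast]
    rcases le_or_gt k m with hk | hk
    · have := sub_le_two_pow_sub hk
      have hk' : (k : ℝ) ≤ m := by exact_mod_cast hk
      rw [abs_of_nonpos (by linarith)]
      linarith [neg_le_abs (x + 2 ^ k)]
    · have := sub_le_two_pow_sub (Nat.succ_le_of_lt hk)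
      have hk' : (m : ℝ) < k := by exact_mod_cast hk
      rw [abs_of_pos (by linarith)]
      push_cast [Nat.succ_eq_add_one] at this
      linarith [le_abs_self (x + 2 ^ k)]

lemma summable_exp_neg_abs_int : Summable fun j : ℤ => Real.exp (-|(j : ℝ)|) := by
  apply Summable.of_nat_of_neg <;> simpa using Real.summable_exp_neg_nat

/-- The strip `|Im ξ| < π/2` truncated at `|Re ξ| < R`, on which the Weierstrass test applies. -/
def truncStrip (R : ℝ) : Set ℂ := {ξ : ℂ | |ξ.re| < R ∧ |ξ.im| < Real.pi / 2}

lemma isOpen_truncStrip (R : ℝ) : IsOpen (truncStrip R) :=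
  (isOpen_lt Complex.continuous_re.abs continuous_const).inter
    (isOpen_lt Complex.continuous_im.abs continuous_const)

lemma summable_trunc_bound (R : ℝ) : Summable fun k : ℕ =>
    Real.exp ((Real.pi / 2) ^ 2 + 1) * (Real.exp R * Real.exp (-(k : ℝ))) :=
  (Real.summable_exp_neg_nat.mul_left _).mul_left _

lemma norm_fterm_le_trunc (R : ℝ) (k : ℕ) (ξ : ℂ) (hξ : ξ ∈ truncStrip R) :
    ‖fterm (k + 2) ξ‖ ≤
      Real.exp ((Real.pi / 2) ^ 2 + 1) * (Real.exp R * Real.exp (-(k : ℝ))) := by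
  refine (norm_fterm_le (k + 2) (by omega) ξ hξ.2).trans ?_
  rw [← Real.exp_add R]
  gcongr
  have h1 : ((k + 2 : ℕ) : ℝ) < 2 ^ (k + 2) := by exact_mod_cast Nat.lt_two_pow_self
  push_cast at h1
  linarith [le_abs_self (ξ.re + 2 ^ (k + 2)), (abs_lt.1 hξ.1).1]

lemma differentiable_fterm (k : ℕ) : Differentiable ℂ (fterm k) := by
  unfold fterm
  fun_prop

lemma mem_truncStrip_of_mem {ξ : ℂ} (hξ : ξ ∈ OmegaDom) : ξ ∈ truncStrip (|ξ.re| + 1) :=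
  ⟨lt_add_one _, hξ.2⟩

/-- The series `f(ξ) = Σ_{k≥2} a_k e^{iλ_k(ξ-ζ_k)} e^{-(ξ-ζ_k)²}` converges locally
uniformly on `Ω`, defines an analytic function there, and this function is bounded. -/
theorem series_analytic_bounded :
    TendstoLocallyUniformlyOn
      (fun n ξ => ∑ k ∈ Finset.range n, fterm (k + 2) ξ)
      (fun ξ => ∑' k : ℕ, fterm (k + 2) ξ) Filter.atTop OmegaDom ∧
    DifferentiableOn ℂ (fun ξ => ∑' k : ℕ, fterm (k + 2) ξ) OmegaDom ∧
    ∃ M : ℝ, ∀ ξ ∈ OmegaDom, ‖∑' k : ℕ, fterm (k + 2) ξ‖ ≤ M := by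
  refine ⟨?_, ?_, ?_⟩
  · intro u hu ξ hξ
    have hunif := tendstoUniformlyOn_tsum_nat (summable_trunc_bound (|ξ.re| + 1))
      (norm_fterm_le_trunc (|ξ.re| + 1))
    exact ⟨truncStrip (|ξ.re| + 1), mem_nhdsWithin_of_mem_nhds
      ((isOpen_truncStrip _).mem_nhds (mem_truncStrip_of_mem hξ)), hunif u hu⟩
  · intro ξ hξ
    have hd := Complex.differentiableOn_tsum_of_summable_norm (summable_trunc_bound (|ξ.re| + 1))
      (fun k => (differentiable_fterm (k + 2)).differentiableOn) (isOpen_truncStrip _)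
      (norm_fterm_le_trunc (|ξ.re| + 1))
    exact (hd.differentiableAt ((isOpen_truncStrip _).mem_nhds
      (mem_truncStrip_of_mem hξ))).differentiableWithinAt
  · refine ⟨Real.exp ((Real.pi / 2) ^ 2 + 1) *
      (Real.exp 1 * ∑' j : ℤ, Real.exp (-|(j : ℝ)|)), fun ξ hξ => ?_⟩
    obtain ⟨m, hm⟩ := exists_int_sub_le ξ.re
    have hinj : Function.Injective fun k : ℕ => (k : ℤ) + 2 - m := fun a b hab => by
      simp only at hab
      omega
    have hs := summable_exp_neg_abs_int.comp_injective hinj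
    have hle := tsum_comp_le_tsum_of_inj summable_exp_neg_abs_int
      (fun j => (Real.exp_pos _).le) hinj
    refine (tsum_of_norm_bounded
      ((hs.hasSum.mul_left (Real.exp 1)).mul_left (Real.exp ((Real.pi / 2) ^ 2 + 1)))
      fun k => ?_).trans (by gcongr)
    refine (norm_fterm_le (k + 2) (by omega) ξ hξ.2).trans ?_
    have := hm (k + 2)
    simp only [Function.comp_apply]
    rw [← Real.exp_add 1]
    gcongr
    push_cast at this ⊢
    linarith
end
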